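/- (Discrete extended Riesz inequality.) Let d ≥ 2, m ≥ 2, let u₁, …, u_m : ℤ^d → [0,∞) be admissible, let G : [0,∞)^m → [0,∞) be supermodular with G(0,…,0) = 0, and for each pair 1 ≤ i < j ≤ m let H_{ij} : [0,∞) → [0,∞) be nonincreasing. Then Σ_{x₁,…,x_m∈ℤ^d} G(u₁(x₁), …, u_m(x_m)) ∏_{1≤i<j≤m} H_{ij}(d(x_i,x_j)) ≤ Σ_{x₁,…,x_m∈ℤ^d} G(u₁*(x₁), …, u_m*(x_m)) ∏_{1≤i<j≤m} H_{ij}(d(x_i,x_j)), where the sums are taken in [0,∞] and u_i* = R_{ℤ^d} u_i. -/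

import Mathlib

open Filter Topology

noncomputable section

abbrev ZLat (d : ℕ) := Fin d → ℤ

def stdVec (d : ℕ) (i : Fin d) : Fin d → ℝ := fun j => if j = i then 1 else 0

/-- The set of directions E⃗ ⊆ ℝ^d. -/
def Evec (d : ℕ) : Set (Fin d → ℝ) :=
  {e | (∃ i, e = stdVec d i) ∨
    (∃ i j : Fin d, i < j ∧ e = fun k => (stdVec d i k + stdVec d j k) / 2) ∨
    (∃ i j : Fin d, i < j ∧ e = fun k => (stdVec d i k - stdVec d j k) / 2)}

/-- A fixed enumeration of E⃗ (for d = 2 it is e₁, e₂, (e₁+e₂)/2, (e₁-e₂)/2). -/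
def EvecList (d : ℕ) : List (Fin d → ℝ) :=
  ((List.finRange d).map (stdVec d)) ++
  ((List.finRange d).flatMap fun i => (List.finRange d).filterMap fun j =>
    if i < j then some (fun k => (stdVec d i k + stdVec d j k) / 2) else none) ++
  ((List.finRange d).flatMap fun i => (List.finRange d).filterMap fun j =>
    if i < j then some (fun k => (stdVec d i k - stdVec d j k) / 2) else none)

/-- The n-th largest value of `u`, counted with multiplicity (1-indexed). -/
def nthLargest {α : Type*} (u : α → NNReal) (n : ℕ) : NNReal :=
  sSup {t | ∃ Ω : Finset α, Ω.card = n ∧ ∀ x ∈ Ω, t ≤ u x}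

/-- The 1-indexed position of the point with doubled coordinate `m` in the
spiral order 0, 1, −1, 2, −2, … (for even m) resp. 1/2, −1/2, 3/2, −3/2, … (for odd m). -/
def posIdx (m : ℤ) : ℕ := (if 0 < m then m else 1 - m).toNat

/-- `x` and `y` lie on a common line with direction `e`. -/
def sameLine {d : ℕ} (e : Fin d → ℝ) (x y : ZLat d) : Prop :=
  ∃ c : ℝ, (fun i => (x i : ℝ) - (y i : ℝ)) = c • e

/-- Twice the inner product ⟨e, x⟩, as an integer. -/
def pairing {d : ℕ} (e : Fin d → ℝ) (x : ZLat d) : ℤ :=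
  ⌊2 * ∑ i, e i * (x i : ℝ)⌋

/-- One-step rearrangement `R_e`. -/
def stepR {d : ℕ} (e : Fin d → ℝ) (u : ZLat d → NNReal) : ZLat d → NNReal :=
  fun x => nthLargest (fun y : {y : ZLat d // sameLine e x y} => u y.1) (posIdx (pairing e x))

/-- `R^k u` : k successive one-step rearrangements cycling through the fixed enumeration. -/
def iterR (d : ℕ) (u : ZLat d → NNReal) : ℕ → ZLat d → NNReal
  | 0 => u
  | k + 1 => stepR ((EvecList d).getD (k % (EvecList d).length) 0) (iterR d u k)

/-- The Schwarz rearrangement on ℤ^d : pointwise limit of `R^k u`. -/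
def RZd (d : ℕ) (u : ZLat d → NNReal) : ZLat d → NNReal :=
  fun x => limUnder atTop fun k => iterR d u k x

def Admissible {α : Type*} (u : α → NNReal) : Prop :=
  ∀ t : NNReal, 0 < t → {x | t < u x}.Finite

def Equimeasurable {α : Type*} (u v : α → NNReal) : Prop :=
  ∀ t : NNReal, 0 < t → Nonempty ({x | t < u x} ≃ {x | t < v x})

/-- Graph distance (ℓ¹ distance) on the lattice ℤ^d. -/
def latDist {d : ℕ} (x y : ZLat d) : ℕ := ∑ i, (x i - y i).natAbs

/-- The i-th standard basis vector of ℤ^d. -/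
def latE {d : ℕ} (i : Fin d) : ZLat d := fun j => if j = i then 1 else 0

/-- ‖∇u‖_p^p : the p-Sobolev energy, summing over each edge {x, x+e_i} once. -/
def gradEnergy (d : ℕ) (p : ℝ) (u : ZLat d → NNReal) : ENNReal :=
  ∑' (x : ZLat d) (i : Fin d), ENNReal.ofReal (|(u (x + latE i) : ℝ) - (u x : ℝ)| ^ p)

/-- ‖∇u‖_p. -/
def gradNorm (d : ℕ) (p : ℝ) (u : ZLat d → NNReal) : ENNReal :=
  gradEnergy d p u ^ (1 / p)

/-- Graph automorphism of the lattice graph ℤ^d. -/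
def IsLatAuto {d : ℕ} (σ : ZLat d ≃ ZLat d) : Prop :=
  ∀ x y : ZLat d, latDist (σ x) (σ y) = 1 ↔ latDist x y = 1

def Supermodular (G : NNReal → NNReal → NNReal) : Prop :=
  ∀ s t s₀ t₀ : NNReal, G (s + s₀) t + G s (t + t₀) ≤ G (s + s₀) (t + t₀) + G s t

def StrictlySupermodular (G : NNReal → NNReal → NNReal) : Prop :=
  ∀ s t s₀ t₀ : NNReal, 0 < s₀ → 0 < t₀ →
    G (s + s₀) t + G s (t + t₀) < G (s + s₀) (t + t₀) + G s t

/-- The values of `u` are strictly decreasing: a₁ > a₂ > a₃ > ⋯ . -/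
def StrictRan {α : Type*} (u : α → NNReal) : Prop :=
  ∀ n : ℕ, 0 < n → nthLargest u (n + 1) < nthLargest u n


/-- Supermodularity for functions of m nonnegative variables. -/
def SupermodularVec {m : ℕ} (G : (Fin m → NNReal) → NNReal) : Prop :=
  ∀ (y : Fin m → NNReal) (s t : NNReal) (i j : Fin m), i ≠ j →
    G (y + Pi.single i s) + G (y + Pi.single j t) ≤
      G (y + Pi.single i s + Pi.single j t) + G y

/-- Lattice form of supermodularity. -/
def LSup {m : ℕ} (G : (Fin m → NNReal) → NNReal) : Prop :=
  ∀ p q, G p + G q ≤ G (p ⊔ q) + G (p ⊓ q)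

def AddSup {m : ℕ} (G : (Fin m → NNReal) → NNReal) (α β : Fin m → NNReal) : Prop :=
  ∀ b, G (b + α) + G (b + β) ≤ G (b + α + β) + G b

theorem AddSup.symm {m : ℕ} {G : (Fin m → NNReal) → NNReal} {α β : Fin m → NNReal}
    (h : AddSup G α β) : AddSup G β α := by
  intro b
  have := h b
  rw [add_comm (G (b + β)), add_right_comm b β α]
  exact this

theorem AddSup.zero {m : ℕ} (G : (Fin m → NNReal) → NNReal) (β : Fin m → NNReal) :
    AddSup G 0 β := by
  intro b
  simp [add_comm]

theorem AddSup.add {m : ℕ} {G : (Fin m → NNReal) → NNReal} {α₁ α₂ β : Fin m → NNReal}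
    (h₁ : AddSup G α₁ β) (h₂ : AddSup G α₂ β) : AddSup G (α₁ + α₂) β := by
  intro b
  have a1 := h₁ b
  have a2 := h₂ (b + α₁)
  rw [← add_assoc b]
  have a3 := add_le_add a1 a2
  have : (G (b + α₁ + α₂) + G (b + β)) + (G (b + α₁) + G (b + α₁ + β)) ≤
      (G (b + α₁ + α₂ + β) + G b) + (G (b + α₁) + G (b + α₁ + β)) := by
    calc _ = _ := by ring
      _ ≤ _ := a3
      _ = _ := by ring
  exact le_of_add_le_add_right this

theorem AddSup.sum {m : ℕ} {G : (Fin m → NNReal) → NNReal} {β : Fin m → NNReal}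
    {ι : Type*} (s : Finset ι) (f : ι → Fin m → NNReal) (h : ∀ i ∈ s, AddSup G (f i) β) :
    AddSup G (∑ i ∈ s, f i) β := by
  classical
  induction s using Finset.induction_on with
  | empty => simpa using AddSup.zero G β
  | insert a s ha ih =>
    rw [Finset.sum_insert ha]
    exact (h a (by simp)).add (ih fun i hi => h i (by simp [hi]))

theorem lsup_of_supermodular {m : ℕ} {G : (Fin m → NNReal) → NNReal} (hG : SupermodularVec G) :
    LSup G := by
  intro p q
  have key : ∀ α β : Fin m → NNReal, (∀ i, α i = 0 ∨ β i = 0) → AddSup G α β := by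
    intro α β h
    rw [← Finset.univ_sum_single α]
    refine AddSup.sum _ _ fun i _ => AddSup.symm ?_
    rw [← Finset.univ_sum_single β]
    refine AddSup.sum _ _ fun j _ => AddSup.symm ?_
    by_cases hij : i = j
    · subst hij
      rcases h i with h | h
      · rw [h, Pi.single_zero]; exact AddSup.zero G _
      · rw [h, Pi.single_zero]; exact (AddSup.zero G _).symm
    · intro b
      exact hG b _ _ i j hij
  have hk := key (p - p ⊓ q) (q - p ⊓ q) (by
    intro i
    rcases le_total (p i) (q i) with h | h <;> simp [h]) (p ⊓ q)
  have e1 : p ⊓ q + (p - p ⊓ q) = p := by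
    funext i; simp
  have e2 : p ⊓ q + (q - p ⊓ q) = q := by
    funext i; simp
  have e3 : p + (q - p ⊓ q) = p ⊔ q := by
    funext i
    rcases le_total (p i) (q i) with h | h <;> simp [h]
  rwa [e1, e2, e3] at hk

/-- Sum over labellings. -/
theorem label_sum {m : ℕ} {G : (Fin m → NNReal) → NNReal} (hG : LSup G)
    {Q : Type*} [Fintype Q] [DecidableEq Q] (f : Fin m → Q) (p q : Fin m → NNReal) :
    ∑ δ : Q → Bool, G (fun i => if δ (f i) then q i else p i) ≤
    ∑ δ : Q → Bool, G (fun i => if δ (f i) then (p ⊓ q) i else (p ⊔ q) i) := by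
  let vec : Finset Q → (Q → Bool) → Fin m → NNReal := fun L δ i =>
    if f i ∈ L then (if δ (f i) then (p ⊓ q) i else (p ⊔ q) i)
    else (if δ (f i) then q i else p i)
  have main : ∀ L : Finset Q, ∑ δ, G (vec ∅ δ) ≤ ∑ δ, G (vec L δ) := by
    intro L
    induction L using Finset.induction_on with
    | empty => exact le_rfl
    | insert l L hl ih =>
      refine ih.trans ?_
      let fl : (Q → Bool) → (Q → Bool) := fun δ => Function.update δ l (!(δ l))
      have hfl : Function.Involutive fl := by
        intro δ
        simp [fl]
      have hs : ∀ F : (Q → Bool) → NNReal, ∑ δ, F δ = ∑ δ, F (fl δ) := fun F =>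
        (Equiv.sum_comp hfl.toPerm F).symm
      have h2 : ∑ δ, (G (vec L δ) + G (vec L (fl δ))) ≤
          ∑ δ, (G (vec (insert l L) δ) + G (vec (insert l L) (fl δ))) := by
        refine Finset.sum_le_sum fun δ _ => ?_
        have h := hG (vec L δ) (vec L (fl δ))
        cases hδ : δ l with
        | false =>
          have e1 : vec (insert l L) δ = vec L δ ⊔ vec L (fl δ) := by
            funext i
            by_cases hi : f i = l
            · simp [vec, fl, hi, hδ, hl]
            · simp [vec, fl, hi]
          have e2 : vec (insert l L) (fl δ) = vec L δ ⊓ vec L (fl δ) := by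
            funext i
            by_cases hi : f i = l
            · simp [vec, fl, hi, hδ, hl]
            · simp [vec, fl, hi]
          rw [e1, e2]; exact h
        | true =>
          have e1 : vec (insert l L) (fl δ) = vec L δ ⊔ vec L (fl δ) := by
            funext i
            by_cases hi : f i = l
            · simp [vec, fl, hi, hδ, hl, max_comm]
            · simp [vec, fl, hi]
          have e2 : vec (insert l L) δ = vec L δ ⊓ vec L (fl δ) := by
            funext i
            by_cases hi : f i = l
            · simp [vec, fl, hi, hδ, hl, min_comm]
            · simp [vec, fl, hi]
          rw [e1, e2, add_comm (G (_ ⊓ _))]; exact h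
      rw [Finset.sum_add_distrib, Finset.sum_add_distrib, ← hs (fun δ => G (vec L δ)),
        ← hs (fun δ => G (vec (insert l L) δ))] at h2
      rw [← two_mul, ← two_mul] at h2
      exact le_of_mul_le_mul_left h2 (by norm_num)
  have := main Finset.univ
  simpa [vec] using this

theorem constrained_sum {m : ℕ} {G : (Fin m → NNReal) → NNReal} (hG : LSup G)
    (S : Finset (Fin m × Fin m)) (p q : Fin m → NNReal) :
    ∑ ε : Fin m → Bool, G (fun i => if ε i then q i else p i) *
        (if ∀ e ∈ S, ε e.1 = ε e.2 then 1 else 0) ≤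
    ∑ ε : Fin m → Bool, G (fun i => if ε i then (p ⊓ q) i else (p ⊔ q) i) *
        (if ∀ e ∈ S, ε e.1 = ε e.2 then 1 else 0) := by
  classical
  let r : Fin m → Fin m → Prop := fun i j => (i, j) ∈ S
  let f : Fin m → Quot r := Quot.mk r
  have : Fintype (Quot r) := Fintype.ofSurjective f Quot.mk_surjective
  have conv : ∀ F : (Fin m → Bool) → NNReal,
      ∑ ε : Fin m → Bool, F ε * (if ∀ e ∈ S, ε e.1 = ε e.2 then 1 else 0) =
      ∑ δ : Quot r → Bool, F (fun i => δ (f i)) := by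
    intro F
    simp only [mul_ite, mul_one, mul_zero]
    rw [← Finset.sum_filter]
    symm
    refine Finset.sum_bij (fun δ _ => fun i => δ (f i)) ?_ ?_ ?_ ?_
    · intro δ _
      simp only [Finset.mem_filter, Finset.mem_univ, true_and]
      intro e he
      have : f e.1 = f e.2 := Quot.sound he
      rw [this]
    · intro δ _ δ' _ h
      funext z
      obtain ⟨i, rfl⟩ := Quot.mk_surjective z
      exact congrFun h i
    · intro ε hε
      simp only [Finset.mem_filter, Finset.mem_univ, true_and] at hε
      exact ⟨Quot.lift ε (fun i j hij => hε (i, j) hij), Finset.mem_univ _, rfl⟩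
    · intro δ _; rfl
  rw [conv (fun ε => G (fun i => if ε i then q i else p i)),
    conv (fun ε => G (fun i => if ε i then (p ⊓ q) i else (p ⊔ q) i))]
  exact label_sum hG f p q

theorem weighted_sum {m : ℕ} {G : (Fin m → NNReal) → NNReal} (hG : LSup G)
    (a b : Fin m → Fin m → NNReal) (hab : ∀ i j, i < j → b i j ≤ a i j)
    (p q : Fin m → NNReal) :
    ∑ ε : Fin m → Bool, G (fun i => if ε i then q i else p i) *
        ∏ i, ∏ j, (if i < j then (if ε i = ε j then a i j else b i j) else 1) ≤
    ∑ ε : Fin m → Bool, G (fun i => if ε i then (p ⊓ q) i else (p ⊔ q) i) *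
        ∏ i, ∏ j, (if i < j then (if ε i = ε j then a i j else b i j) else 1) := by
  classical
  let B : Fin m × Fin m → NNReal := fun e => if e.1 < e.2 then b e.1 e.2 else 1
  let C : Fin m × Fin m → NNReal := fun e => if e.1 < e.2 then a e.1 e.2 - b e.1 e.2 else 0
  have hprod : ∀ ε : Fin m → Bool,
      ∏ i, ∏ j, (if i < j then (if ε i = ε j then a i j else b i j) else 1) =
      ∑ t ∈ (Finset.univ : Finset (Fin m × Fin m)).powerset,
        ((∏ e ∈ t, B e) * ∏ e ∈ Finset.univ \ t, C e) *
          (if ∀ e ∈ Finset.univ \ t, ε e.1 = ε e.2 then 1 else 0) := by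
    intro ε
    rw [← Fintype.prod_prod_type' (f := fun i j =>
      (if i < j then (if ε i = ε j then a i j else b i j) else 1))]
    have : ∀ e : Fin m × Fin m,
        (if e.1 < e.2 then (if ε e.1 = ε e.2 then a e.1 e.2 else b e.1 e.2) else 1) =
        B e + C e * (if ε e.1 = ε e.2 then 1 else 0) := by
      intro e
      by_cases h : e.1 < e.2
      · by_cases h' : ε e.1 = ε e.2
        · simp only [B, C, h, h', if_true, mul_one]
          exact (add_tsub_cancel_of_le (hab _ _ h)).symm
        · simp [B, C, h, h']
      · simp [B, C, h]
    simp only [this]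
    rw [Finset.prod_add]
    refine Finset.sum_congr rfl fun t _ => ?_
    rw [Finset.prod_mul_distrib, Finset.prod_boole, mul_assoc]
    congr!
  have conv : ∀ F : (Fin m → Bool) → NNReal,
      ∑ ε : Fin m → Bool, F ε *
        ∏ i, ∏ j, (if i < j then (if ε i = ε j then a i j else b i j) else 1) =
      ∑ t ∈ (Finset.univ : Finset (Fin m × Fin m)).powerset,
        ((∏ e ∈ t, B e) * ∏ e ∈ Finset.univ \ t, C e) *
          ∑ ε : Fin m → Bool, F ε *
            (if ∀ e ∈ Finset.univ \ t, ε e.1 = ε e.2 then 1 else 0) := by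
    intro F
    simp only [hprod, Finset.mul_sum]
    rw [Finset.sum_comm]
    refine Finset.sum_congr rfl fun t _ => Finset.sum_congr rfl fun ε _ => ?_
    ring
  rw [conv (fun ε => G (fun i => if ε i then q i else p i)),
    conv (fun ε => G (fun i => if ε i then (p ⊓ q) i else (p ⊔ q) i))]
  refine Finset.sum_le_sum fun t _ => ?_
  refine mul_le_mul_of_nonneg_left ?_ zero_le
  convert constrained_sum hG (Finset.univ \ t) p q

/-- An integer potential with a generic centre. -/
def wt (d : ℕ) (x : ZLat d) : ℕ :=
  ∑ k : Fin d, ((2 * (d + 1) : ℤ) * x k - (d - (k : ℕ) : ℤ)).natAbs ^ 2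

/-- A reflection with a preferred half space. -/
structure LRefl (d : ℕ) where
  σ : ZLat d → ZLat d
  P : Set (ZLat d)
  inv : ∀ x, σ (σ x) = x
  cover : ∀ x, x ∈ P ∨ σ x ∈ P
  fix : ∀ x, x ∈ P → σ x ∈ P → σ x = x
  iso : ∀ x y, latDist (σ x) (σ y) = latDist x y
  dist : ∀ x y, x ∈ P → y ∈ P → latDist x y ≤ latDist x (σ y)
  pot : ∀ x, x ∈ P → σ x ≠ x → wt d x < wt d (σ x)

open Classical in
/-- Polarization. -/
def LRefl.pol {d : ℕ} (r : LRefl d) (u : ZLat d → NNReal) : ZLat d → NNReal :=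
  fun x => if x ∈ r.P then max (u x) (u (r.σ x)) else min (u x) (u (r.σ x))

theorem LRefl.pol_of_mem {d : ℕ} (r : LRefl d) (u : ZLat d → NNReal) {x : ZLat d}
    (hx : x ∈ r.P) : r.pol u x = max (u x) (u (r.σ x)) := by
  simp [LRefl.pol, hx]

theorem LRefl.pol_of_notMem {d : ℕ} (r : LRefl d) (u : ZLat d → NNReal) {x : ZLat d}
    (hx : x ∉ r.P) : r.pol u x = min (u x) (u (r.σ x)) := by
  simp [LRefl.pol, hx]

theorem LRefl.pol_σ {d : ℕ} (r : LRefl d) (u : ZLat d → NNReal) {x : ZLat d}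
    (hx : x ∈ r.P) : r.pol u (r.σ x) = min (u x) (u (r.σ x)) := by
  by_cases h : r.σ x ∈ r.P
  · have := r.fix x hx h
    rw [this, r.pol_of_mem u hx, this]; simp
  · rw [r.pol_of_notMem u h, r.inv, min_comm]

/-- The summand. -/
def summand {d m : ℕ} (G : (Fin m → NNReal) → NNReal) (H : Fin m → Fin m → NNReal → NNReal)
    (u : Fin m → ZLat d → NNReal) (x : Fin m → ZLat d) : NNReal :=
  G (fun i => u i (x i)) *
    ∏ i : Fin m, ∏ j : Fin m, (if i < j then H i j (latDist (x i) (x j)) else 1)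

def energy {d m : ℕ} (G : (Fin m → NNReal) → NNReal) (H : Fin m → Fin m → NNReal → NNReal)
    (u : Fin m → ZLat d → NNReal) : ENNReal :=
  ∑' x : Fin m → ZLat d, (summand G H u x : ENNReal)

def LRefl.flip {d m : ℕ} (r : LRefl d) (ε : Fin m → Bool) (x : Fin m → ZLat d) :
    Fin m → ZLat d := fun i => if ε i then r.σ (x i) else x i

theorem LRefl.flip_flip {d m : ℕ} (r : LRefl d) (ε δ : Fin m → Bool) (x : Fin m → ZLat d) :
    r.flip ε (r.flip δ x) = r.flip (fun i => xor (ε i) (δ i)) x := by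
  funext i
  cases h : ε i <;> cases h' : δ i <;> simp [LRefl.flip, h, h', r.inv]

theorem LRefl.flip_invol {d m : ℕ} (r : LRefl d) (ε : Fin m → Bool) :
    Function.Involutive (r.flip ε) := by
  intro x
  rw [r.flip_flip]
  funext i
  simp [LRefl.flip]

theorem orbit_le_of_mem {d m : ℕ} (r : LRefl d) {G : (Fin m → NNReal) → NNReal} (hG : LSup G)
    (H : Fin m → Fin m → NNReal → NNReal) (hH : ∀ i j : Fin m, i < j → Antitone (H i j))
    (u : Fin m → ZLat d → NNReal) (x : Fin m → ZLat d) (hx : ∀ i, x i ∈ r.P) :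
    ∑ ε : Fin m → Bool, summand G H u (r.flip ε x) ≤
    ∑ ε : Fin m → Bool, summand G H (fun i => r.pol (u i)) (r.flip ε x) := by
  have hw := weighted_sum hG (fun i j => H i j (latDist (x i) (x j)))
    (fun i j => H i j (latDist (x i) (r.σ (x j))))
    (fun i j hij => hH i j hij (by exact_mod_cast r.dist _ _ (hx i) (hx j)))
    (fun i => u i (x i)) (fun i => u i (r.σ (x i)))
  have hd : ∀ (ε : Fin m → Bool) (i j : Fin m), H i j (latDist (r.flip ε x i) (r.flip ε x j)) =
      if ε i = ε j then H i j (latDist (x i) (x j)) else H i j (latDist (x i) (r.σ (x j))) := by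
    intro ε i j
    cases h : ε i <;> cases h' : ε j <;> simp [LRefl.flip, h, h', r.iso]
    rw [← r.iso, r.inv]
  convert hw using 1
  · refine Finset.sum_congr rfl fun ε _ => ?_
    unfold summand
    simp only [hd]
    congr 2
    funext i
    cases h : ε i <;> simp [LRefl.flip, h]
  · refine Finset.sum_congr rfl fun ε _ => ?_
    unfold summand
    simp only [hd]
    congr 2
    funext i
    cases h : ε i
    · simp [LRefl.flip, h, r.pol_of_mem _ (hx i)]
    · simp [LRefl.flip, h, r.pol_σ _ (hx i)]

theorem orbit_le {d m : ℕ} (r : LRefl d) {G : (Fin m → NNReal) → NNReal} (hG : LSup G)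
    (H : Fin m → Fin m → NNReal → NNReal) (hH : ∀ i j : Fin m, i < j → Antitone (H i j))
    (u : Fin m → ZLat d → NNReal) (x : Fin m → ZLat d) :
    ∑ ε : Fin m → Bool, summand G H u (r.flip ε x) ≤
    ∑ ε : Fin m → Bool, summand G H (fun i => r.pol (u i)) (r.flip ε x) := by
  classical
  let δ : Fin m → Bool := fun i => if x i ∈ r.P then false else true
  have hδ : ∀ i, r.flip δ x i ∈ r.P := by
    intro i
    by_cases h : x i ∈ r.P
    · simp [LRefl.flip, δ, h]
    · simpa [LRefl.flip, δ, h] using (r.cover (x i)).resolve_left h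
  have h := orbit_le_of_mem r hG H hH u (r.flip δ x) hδ
  simp only [r.flip_flip] at h
  have hinv : Function.Involutive (fun (ε : Fin m → Bool) => (fun i => xor (ε i) (δ i))) := by
    intro ε
    funext i
    simp
  have hs : ∀ F : (Fin m → Bool) → NNReal,
      ∑ ε : Fin m → Bool, F (fun i => xor (ε i) (δ i)) = ∑ ε, F ε := fun F =>
    Equiv.sum_comp hinv.toPerm F
  rw [hs (fun ε => summand G H u (r.flip ε x)),
    hs (fun ε => summand G H (fun i => r.pol (u i)) (r.flip ε x))] at h
  exact h

theorem energy_pol {d m : ℕ} (r : LRefl d) {G : (Fin m → NNReal) → NNReal} (hG : LSup G)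
    (H : Fin m → Fin m → NNReal → NNReal) (hH : ∀ i j : Fin m, i < j → Antitone (H i j))
    (u : Fin m → ZLat d → NNReal) :
    energy G H u ≤ energy G H (fun i => r.pol (u i)) := by
  have conv : ∀ v : Fin m → ZLat d → NNReal,
      (Fintype.card (Fin m → Bool) : ENNReal) * energy G H v =
      ∑' x : Fin m → ZLat d,
        ((∑ ε : Fin m → Bool, summand G H v (r.flip ε x) : NNReal) : ENNReal) := by
    intro v
    have h1 : ∀ ε : Fin m → Bool,
        ∑' x : Fin m → ZLat d, (summand G H v (r.flip ε x) : ENNReal) = energy G H v := fun ε =>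
      Equiv.tsum_eq (r.flip_invol ε).toPerm (fun x => (summand G H v x : ENNReal))
    simp only [ENNReal.ofNNReal_finsetSum]
    rw [Summable.tsum_finsetSum (fun _ _ => ENNReal.summable)]
    simp only [h1]
    simp
  have h : (Fintype.card (Fin m → Bool) : ENNReal) * energy G H u ≤
      (Fintype.card (Fin m → Bool) : ENNReal) * energy G H (fun i => r.pol (u i)) := by
    rw [conv, conv]
    refine ENNReal.tsum_le_tsum fun x => ?_
    exact_mod_cast orbit_le r hG H hH u x
  refine (ENNReal.mul_le_mul_iff_right ?_ ?_).1 h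
  · simp
  · exact ENNReal.natCast_ne_top _

/-- The energy potential of a function. -/
def phi {d : ℕ} (u : ZLat d → NNReal) : ENNReal := ∑' x, ((u x * (wt d x : NNReal) : NNReal) : ENNReal)

theorem phi_ne_top {d : ℕ} (u : ZLat d → NNReal) (hu : {x | u x ≠ 0}.Finite) : phi u ≠ ⊤ := by
  unfold phi
  rw [tsum_eq_sum (s := hu.toFinset)]
  · rw [← ENNReal.ofNNReal_finsetSum]; exact ENNReal.coe_ne_top
  · intro x hx
    have : u x = 0 := by simpa using hx
    simp [this]

theorem rearr_le (a b A B : NNReal) (hAB : A ≤ B) :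
    max a b * A + min a b * B ≤ a * A + b * B := by
  rcases le_total a b with h | h
  · rw [max_eq_right h, min_eq_left h]
    rw [← NNReal.coe_le_coe] at *
    push_cast
    nlinarith
  · rw [max_eq_left h, min_eq_right h]

theorem rearr_lt (a b A B : NNReal) (hAB : A < B) (hab : a < b) :
    max a b * A + min a b * B < a * A + b * B := by
  rw [max_eq_right hab.le, min_eq_left hab.le]
  rw [← NNReal.coe_lt_coe] at *
  push_cast
  nlinarith

theorem LRefl.wt_le {d : ℕ} (r : LRefl d) {x : ZLat d} (hx : x ∈ r.P) :
    wt d x ≤ wt d (r.σ x) := by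
  by_cases h : r.σ x = x
  · rw [h]
  · exact (r.pot x hx h).le

theorem phi_two {d : ℕ} (r : LRefl d) (v : ZLat d → NNReal) :
    2 * phi v = ∑' x, ((v x * (wt d x : NNReal) + v (r.σ x) * (wt d (r.σ x) : NNReal) : NNReal)
      : ENNReal) := by
  have hi : Function.Involutive r.σ := r.inv
  have h1 : ∑' x, ((v (r.σ x) * (wt d (r.σ x) : NNReal) : NNReal) : ENNReal) = phi v :=
    Equiv.tsum_eq hi.toPerm (fun x => ((v x * (wt d x : NNReal) : NNReal) : ENNReal))
  simp only [ENNReal.coe_add]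
  rw [ENNReal.tsum_add, h1, two_mul]
  rfl

theorem phi_term_le {d : ℕ} (r : LRefl d) (u : ZLat d → NNReal) (x : ZLat d) :
    r.pol u x * (wt d x : NNReal) + r.pol u (r.σ x) * (wt d (r.σ x) : NNReal) ≤
    u x * (wt d x : NNReal) + u (r.σ x) * (wt d (r.σ x) : NNReal) := by
  have key : ∀ z, z ∈ r.P →
      r.pol u z * (wt d z : NNReal) + r.pol u (r.σ z) * (wt d (r.σ z) : NNReal) ≤
      u z * (wt d z : NNReal) + u (r.σ z) * (wt d (r.σ z) : NNReal) := by
    intro z hz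
    rw [r.pol_of_mem u hz, r.pol_σ u hz]
    exact rearr_le _ _ _ _ (by exact_mod_cast r.wt_le hz)
  rcases r.cover x with h | h
  · exact key x h
  · have := key _ h
    rw [r.inv] at this
    rw [add_comm, add_comm (u x * _)]
    exact this

theorem phi_pol_le {d : ℕ} (r : LRefl d) (u : ZLat d → NNReal) : phi (r.pol u) ≤ phi u := by
  have : 2 * phi (r.pol u) ≤ 2 * phi u := by
    rw [phi_two r, phi_two r]
    exact ENNReal.tsum_le_tsum fun x => by exact_mod_cast phi_term_le r u x
  exact (ENNReal.mul_le_mul_iff_right (by norm_num) (by norm_num)).1 this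

theorem phi_pol_eq {d : ℕ} (r : LRefl d) (u : ZLat d → NNReal) (hu : {x | u x ≠ 0}.Finite)
    (h : phi (r.pol u) = phi u) : r.pol u = u := by
  by_contra hne
  obtain ⟨x, hx⟩ := Function.ne_iff.1 hne
  have hz : ∃ z, z ∈ r.P ∧ u z < u (r.σ z) := by
    by_cases hP : x ∈ r.P
    · refine ⟨x, hP, ?_⟩
      rw [r.pol_of_mem u hP] at hx
      by_contra hc
      exact hx (max_eq_left (not_lt.1 hc))
    · refine ⟨r.σ x, (r.cover x).resolve_left hP, ?_⟩
      rw [r.pol_of_notMem u hP] at hx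
      rw [r.inv]
      by_contra hc
      exact hx (min_eq_left (not_lt.1 hc))
  obtain ⟨z, hzP, hlt⟩ := hz
  have hzne : r.σ z ≠ z := fun h => by rw [h] at hlt; exact lt_irrefl _ hlt
  have hfin := phi_ne_top u hu
  have : 2 * phi (r.pol u) < 2 * phi u := by
    rw [phi_two r (r.pol u), phi_two r u]
    refine ENNReal.tsum_lt_tsum (i := z) ?_ (fun x => by exact_mod_cast phi_term_le r u x) ?_
    · rw [← phi_two r, h]
      exact ENNReal.mul_ne_top (by norm_num) hfin
    · rw [r.pol_of_mem u hzP, r.pol_σ u hzP]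
      exact_mod_cast rearr_lt _ _ _ _ (by exact_mod_cast r.pot z hzP hzne) hlt
  rw [h] at this
  exact lt_irrefl _ this

/-- The class of tuples with controlled support and values. -/
def Kset (d m M : ℕ) (V : Set NNReal) : Set (Fin m → ZLat d → NNReal) :=
  {U | ∀ i x, (U i x ≠ 0 → wt d x ≤ M) ∧ U i x ∈ V}

theorem wt_ball_finite (d M : ℕ) : {x : ZLat d | wt d x ≤ M}.Finite := by
  refine (Set.finite_Icc (fun _ => -(M + d : ℤ)) (fun _ => (M + d : ℤ))).subset ?_
  intro x hx
  have hk : ∀ k, |x k| ≤ (M + d : ℤ) := by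
    intro k
    have h1 : ((2 * (d + 1) : ℤ) * x k - (d - (k : ℕ) : ℤ)).natAbs ^ 2 ≤ M :=
      (Finset.single_le_sum (f := fun k : Fin d =>
        ((2 * (d + 1) : ℤ) * x k - (d - (k : ℕ) : ℤ)).natAbs ^ 2)
        (fun _ _ => Nat.zero_le _) (Finset.mem_univ k)).trans hx
    have h2 : ((2 * (d + 1) : ℤ) * x k - (d - (k : ℕ) : ℤ)).natAbs ≤ M :=
      (Nat.le_self_pow (by norm_num) _).trans h1
    have hkd : (k : ℕ) < d := k.2
    have h3 : |(2 * (d + 1) : ℤ) * x k - (d - (k : ℕ) : ℤ)| ≤ M := by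
      rw [Int.abs_eq_natAbs]; exact_mod_cast h2
    rw [abs_le] at h3 ⊢
    have hd0 : (0 : ℤ) ≤ d := by positivity
    have hkd' : ((k : ℕ) : ℤ) < d := by exact_mod_cast hkd
    have hk0 : (0 : ℤ) ≤ ((k : ℕ) : ℤ) := by positivity
    constructor
    · by_contra hc
      push Not at hc
      nlinarith
    · by_contra hc
      push Not at hc
      nlinarith
  refine ⟨fun k => (abs_le.1 (hk k)).1, fun k => (abs_le.1 (hk k)).2⟩

theorem Kset_finite (d m M : ℕ) {V : Set NNReal} (hV : V.Finite) : (Kset d m M V).Finite := by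
  let B := {x : ZLat d // wt d x ≤ M}
  have : Finite B := (wt_ball_finite d M)
  let res : (Fin m → ZLat d → NNReal) → (Fin m → B → NNReal) := fun U i x => U i x.1
  refine Set.Finite.of_finite_image (f := res) ?_ ?_
  · refine (Set.Finite.pi' (fun _ : Fin m => Set.Finite.pi' (fun _ : B => hV))).subset ?_
    rintro _ ⟨U, hU, rfl⟩ i x
    exact (hU i x.1).2
  · intro U hU W hW h
    funext i x
    by_cases hx : wt d x ≤ M
    · exact congrFun (congrFun h i) ⟨x, hx⟩
    · have h1 : U i x = 0 := by
        by_contra hc; exact hx ((hU i x).1 hc)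
      have h2 : W i x = 0 := by
        by_contra hc; exact hx ((hW i x).1 hc)
      rw [h1, h2]

theorem Kset_support {d m M : ℕ} {V : Set NNReal} {U : Fin m → ZLat d → NNReal}
    (hU : U ∈ Kset d m M V) (i : Fin m) : {x | U i x ≠ 0}.Finite :=
  (wt_ball_finite d M).subset fun x hx => (hU i x).1 hx

theorem Kset_pol {d m M : ℕ} {V : Set NNReal} {U : Fin m → ZLat d → NNReal}
    (hU : U ∈ Kset d m M V) (r : LRefl d) : (fun i => r.pol (U i)) ∈ Kset d m M V := by
  intro i x
  by_cases hx : x ∈ r.P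
  · simp only [r.pol_of_mem _ hx]
    rcases max_choice (U i x) (U i (r.σ x)) with h | h
    · rw [h]; exact hU i x
    · rw [h]; exact ⟨fun h' => (r.wt_le hx).trans ((hU i _).1 h'), (hU i _).2⟩
  · simp only [r.pol_of_notMem _ hx]
    refine ⟨fun h => (hU i x).1 fun h0 => h (by simp [h0]), ?_⟩
    rcases min_choice (U i x) (U i (r.σ x)) with h | h
    · rw [h]; exact (hU i x).2
    · rw [h]; exact (hU i _).2

theorem exists_Kset {d m : ℕ} (U : Fin m → ZLat d → NNReal) (hU : ∀ i, {x | U i x ≠ 0}.Finite) :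
    ∃ (M : ℕ) (V : Set NNReal), V.Finite ∧ U ∈ Kset d m M V := by
  let S : Set (ZLat d) := ⋃ i, {x | U i x ≠ 0}
  have hS : S.Finite := Set.finite_iUnion hU
  obtain ⟨M, hM⟩ := (hS.image (wt d)).bddAbove
  refine ⟨M, insert 0 (⋃ i, (U i) '' S), (Set.finite_iUnion fun i => hS.image _).insert 0, ?_⟩
  intro i x
  have hmem : U i x ≠ 0 → x ∈ S := fun h => Set.mem_iUnion.2 ⟨i, h⟩
  refine ⟨fun h => hM ⟨x, hmem h, rfl⟩, ?_⟩
  by_cases h : U i x = 0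
  · left; exact h
  · right
    exact Set.mem_iUnion.2 ⟨i, x, hmem h, rfl⟩

/-- One polarization step on tuples. -/
def PStep {d m : ℕ} (U W : Fin m → ZLat d → NNReal) : Prop :=
  ∃ r : LRefl d, W = fun i => r.pol (U i)

def Reach {d m : ℕ} : (Fin m → ZLat d → NNReal) → (Fin m → ZLat d → NNReal) → Prop :=
  Relation.ReflTransGen PStep

def Phi {d m : ℕ} (U : Fin m → ZLat d → NNReal) : ENNReal := ∑ i, phi (U i)

theorem Phi_ne_top {d m M : ℕ} {V : Set NNReal} {U : Fin m → ZLat d → NNReal}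
    (hU : U ∈ Kset d m M V) : Phi U ≠ ⊤ := by
  unfold Phi
  exact ENNReal.sum_ne_top.2 fun i _ => phi_ne_top _ (Kset_support hU i)

theorem Phi_pol {d m M : ℕ} {V : Set NNReal} {U : Fin m → ZLat d → NNReal}
    (hU : U ∈ Kset d m M V) (r : LRefl d) :
    Phi (fun i => r.pol (U i)) ≤ Phi U ∧
      (Phi (fun i => r.pol (U i)) = Phi U → (fun i => r.pol (U i)) = U) := by
  refine ⟨Finset.sum_le_sum fun i _ => phi_pol_le r _, fun h => ?_⟩
  have hfin : ∀ i, phi (U i) ≠ ⊤ := fun i => phi_ne_top _ (Kset_support hU i)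
  by_contra hne
  obtain ⟨i, hi⟩ := Function.ne_iff.1 hne
  have hlt : phi (r.pol (U i)) < phi (U i) :=
    lt_of_le_of_ne (phi_pol_le r _) fun h => hi (phi_pol_eq r _ (Kset_support hU i) h)
  have h3 : Phi (fun i => r.pol (U i)) < Phi U := by
    unfold Phi
    rw [← Finset.add_sum_erase _ _ (Finset.mem_univ i),
      ← Finset.add_sum_erase _ (fun i => phi (U i)) (Finset.mem_univ i)]
    refine ENNReal.add_lt_add_of_lt_of_le ?_ hlt (Finset.sum_le_sum fun i _ => phi_pol_le r _)
    exact ENNReal.sum_ne_top.2 fun j _ => ne_top_of_le_ne_top (hfin j) (phi_pol_le r _)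
  exact h3.ne h

theorem Reach.props {d m M : ℕ} {V : Set NNReal} {U W : Fin m → ZLat d → NNReal}
    (hU : U ∈ Kset d m M V) (h : Reach U W) :
    W ∈ Kset d m M V ∧ Phi W ≤ Phi U ∧ (Phi W = Phi U → W = U) := by
  induction h with
  | refl => exact ⟨hU, le_rfl, fun _ => rfl⟩
  | tail _ hstep ih =>
    obtain ⟨r, rfl⟩ := hstep
    obtain ⟨hK, hle, heq⟩ := ih
    obtain ⟨h1, h2⟩ := Phi_pol hK r
    refine ⟨Kset_pol hK r, h1.trans hle, fun h => ?_⟩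
    have e1 := le_antisymm hle (h ▸ h1)
    rw [h2 (h.trans e1.symm)]
    exact heq e1

theorem Reach.energy {d m : ℕ} {G : (Fin m → NNReal) → NNReal} (hG : LSup G)
    (H : Fin m → Fin m → NNReal → NNReal) (hH : ∀ i j : Fin m, i < j → Antitone (H i j))
    {U W : Fin m → ZLat d → NNReal} (h : Reach U W) : energy G H U ≤ energy G H W := by
  induction h with
  | refl => exact le_rfl
  | tail _ hstep ih =>
    obtain ⟨r, rfl⟩ := hstep
    exact ih.trans (energy_pol r hG H hH _)

/-- Stabilization. -/
theorem stabilize {d m M : ℕ} {V : Set NNReal} (hV : V.Finite)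
    (S : ℕ → Fin m → ZLat d → NNReal) (h0 : S 0 ∈ Kset d m M V)
    (hS : ∀ k, Reach (S k) (S (k + 1))) : ∃ k₀, ∀ k, k₀ ≤ k → S k = S k₀ := by
  have hK : ∀ k, S k ∈ Kset d m M V := by
    intro k
    induction k with
    | zero => exact h0
    | succ k ih => exact ((hS k).props ih).1
  have hfin : (Set.range fun k => Phi (S k)).Finite := by
    refine ((Kset_finite d m M hV).image Phi).subset ?_
    rintro _ ⟨k, rfl⟩
    exact ⟨S k, hK k, rfl⟩
  have hanti : Antitone fun k => Phi (S k) :=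
    antitone_nat_of_succ_le fun k => ((hS k).props (hK k)).2.1
  obtain ⟨_, ⟨k₀, rfl⟩, hmin⟩ := Set.exists_min_image _ id hfin ⟨_, ⟨0, rfl⟩⟩
  refine ⟨k₀, fun k hk => ?_⟩
  induction k, hk using Nat.le_induction with
  | base => rfl
  | succ k hk ih =>
    rw [← ih]
    refine ((hS k).props (hK k)).2.2 (le_antisymm ((hS k).props (hK k)).2.1 ?_)
    exact (hanti hk).trans (hmin _ ⟨k + 1, rfl⟩)

theorem sameLine.rfl' {d : ℕ} {e : Fin d → ℝ} {x : ZLat d} : sameLine e x x :=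
  ⟨0, by funext i; simp⟩

theorem sameLine.symm {d : ℕ} {e : Fin d → ℝ} {x y : ZLat d} (h : sameLine e x y) :
    sameLine e y x := by
  obtain ⟨c, hc⟩ := h
  refine ⟨-c, ?_⟩
  funext i
  have := congrFun hc i
  simp only [Pi.smul_apply, smul_eq_mul] at this ⊢
  linarith

theorem sameLine.trans {d : ℕ} {e : Fin d → ℝ} {x y z : ZLat d} (h : sameLine e x y)
    (h' : sameLine e y z) : sameLine e x z := by
  obtain ⟨c, hc⟩ := h
  obtain ⟨c', hc'⟩ := h'
  refine ⟨c + c', ?_⟩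
  funext i
  have h1 := congrFun hc i
  have h2 := congrFun hc' i
  simp only [Pi.smul_apply, smul_eq_mul] at h1 h2 ⊢
  linarith

theorem nthLargest_equiv {α : Type*} (τ : Equiv.Perm α) (u : α → NNReal) (n : ℕ) :
    nthLargest (fun x => u (τ x)) n = nthLargest u n := by
  unfold nthLargest
  congr 1
  ext t
  constructor
  · rintro ⟨Ω, hc, h⟩
    refine ⟨Ω.map τ.toEmbedding, by simpa using hc, ?_⟩
    intro x hx
    obtain ⟨y, hy, rfl⟩ := Finset.mem_map.1 hx
    exact h y hy
  · rintro ⟨Ω, hc, h⟩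
    refine ⟨Ω.map τ.symm.toEmbedding, by simpa using hc, ?_⟩
    intro x hx
    obtain ⟨y, hy, rfl⟩ := Finset.mem_map.1 hx
    simpa using h y hy

theorem stepR_pol {d : ℕ} {e : Fin d → ℝ} (r : LRefl d) (hl : ∀ x, sameLine e x (r.σ x))
    (u : ZLat d → NNReal) : stepR e (r.pol u) = stepR e u := by
  classical
  let c : ZLat d → Prop := fun y => (y ∈ r.P ∧ u y < u (r.σ y)) ∨ (y ∉ r.P ∧ u (r.σ y) < u y)
  let τ : ZLat d → ZLat d := fun y => if c y then r.σ y else y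
  have hc : ∀ y, c y → c (r.σ y) := by
    rintro y (⟨hy, h⟩ | ⟨hy, h⟩)
    · right
      refine ⟨fun h' => ?_, by rwa [r.inv]⟩
      rw [r.fix y hy h'] at h
      exact lt_irrefl _ h
    · left
      exact ⟨(r.cover y).resolve_left hy, by rwa [r.inv]⟩
  have hinv : ∀ y, τ (τ y) = y := by
    intro y
    by_cases h : c y
    · simp [τ, h, hc y h, r.inv]
    · simp [τ, h]
  have hpol : ∀ y, r.pol u y = u (τ y) := by
    intro y
    by_cases hy : y ∈ r.P
    · rw [r.pol_of_mem u hy]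
      by_cases h : u y < u (r.σ y)
      · simp [τ, c, hy, h, h.le]
      · simp [τ, c, hy, h, not_lt.1 h]
    · rw [r.pol_of_notMem u hy]
      by_cases h : u (r.σ y) < u y
      · simp [τ, c, hy, h, h.le]
      · simp [τ, c, hy, h, not_lt.1 h]
  have hτ : ∀ y, sameLine e y (τ y) := by
    intro y
    by_cases h : c y
    · simpa [τ, h] using hl y
    · simpa [τ, h] using sameLine.rfl'
  funext x
  unfold stepR
  let T : {y : ZLat d // sameLine e x y} → {y : ZLat d // sameLine e x y} :=
    fun y => ⟨τ y.1, y.2.trans (hτ y.1)⟩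
  have hT : Function.Involutive T := fun y => Subtype.ext (hinv y.1)
  rw [← nthLargest_equiv hT.toPerm (fun y : {y : ZLat d // sameLine e x y} => u y.1)]
  congr 1
  funext y
  exact hpol y.1

/-- Two reflections that sort the lines with direction `e`. -/
structure LineData (d : ℕ) (e : Fin d → ℝ) where
  r0 : LRefl d
  r1 : LRefl d
  P0 : r0.P = {x | 0 ≤ pairing e x}
  P1 : r1.P = {x | pairing e x ≤ 1}
  m0 : ∀ x, pairing e (r0.σ x) = - pairing e x
  m1 : ∀ x, pairing e (r1.σ x) = 2 - pairing e x
  l0 : ∀ x, sameLine e x (r0.σ x)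
  l1 : ∀ x, sameLine e x (r1.σ x)
  inj : ∀ x y, sameLine e x y → pairing e x = pairing e y → x = y
  par : ∀ x y, sameLine e x y → pairing e x % 2 = pairing e y % 2

theorem posIdx_pos (m : ℤ) : 1 ≤ posIdx m := by
  unfold posIdx; split_ifs <;> omega

theorem stepR_fixed {d : ℕ} {e : Fin d → ℝ} (D : LineData d e) (v : ZLat d → NNReal)
    (h0 : D.r0.pol v = v) (h1 : D.r1.pol v = v) : stepR e v = v := by
  classical
  let pos : ZLat d → ℕ := fun x => posIdx (pairing e x)
  let prev : ZLat d → ZLat d := fun x => if 0 < pairing e x then D.r1.σ x else D.r0.σ x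
  have prev_pos : ∀ x, 2 ≤ pos x → pos (prev x) + 1 = pos x := by
    intro x hx
    by_cases h : 0 < pairing e x
    · simp only [pos, prev, h, if_true, D.m1, posIdx] at hx ⊢
      split_ifs <;> omega
    · simp only [pos, prev, h, if_false, D.m0, posIdx] at hx ⊢
      split_ifs <;> omega
  have prev_line : ∀ x, sameLine e x (prev x) := by
    intro x
    by_cases h : 0 < pairing e x
    · simpa [prev, h] using D.l1 x
    · simpa [prev, h] using D.l0 x
  have prev_val : ∀ x, 2 ≤ pos x → v x ≤ v (prev x) := by
    intro x hx
    by_cases h : 0 < pairing e x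
    · have hm : D.r1.σ x ∈ D.r1.P := by
        rw [D.P1]
        change pairing e (D.r1.σ x) ≤ 1
        rw [D.m1]
        omega
      have h2 := D.r1.pol_of_mem v hm
      rw [h1, D.r1.inv] at h2
      simp only [prev, h, if_true]
      rw [h2]; exact le_max_right _ _
    · have hm : D.r0.σ x ∈ D.r0.P := by
        rw [D.P0]
        change 0 ≤ pairing e (D.r0.σ x)
        rw [D.m0]
        omega
      have h2 := D.r0.pol_of_mem v hm
      rw [h0, D.r0.inv] at h2
      simp only [prev, h, if_false]
      rw [h2]; exact le_max_right _ _
  have iter : ∀ (j : ℕ) (x : ZLat d), j < pos x →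
      pos (prev^[j] x) + j = pos x ∧ sameLine e x (prev^[j] x) ∧ v x ≤ v (prev^[j] x) := by
    intro j
    induction j with
    | zero => intro x _; exact ⟨rfl, sameLine.rfl', le_rfl⟩
    | succ j ih =>
      intro x hx
      obtain ⟨a1, a2, a3⟩ := ih x (by omega)
      rw [Function.iterate_succ_apply']
      refine ⟨?_, a2.trans (prev_line _), a3.trans (prev_val _ (by omega))⟩
      have := prev_pos (prev^[j] x) (by omega)
      omega
  have pos_inj : ∀ x y, sameLine e x y → pos x = pos y → x = y := by
    intro x y hl hp
    by_cases hpar : pairing e x = pairing e y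
    · exact D.inj x y hl hpar
    -- parity argument: positions of distinct coordinates on a line are distinct
    · exfalso
      have hq := D.par x y hl
      simp only [pos, posIdx] at hp
      split_ifs at hp <;> omega
  funext x
  unfold stepR nthLargest
  refine IsGreatest.csSup_eq ⟨?_, ?_⟩
  · refine ⟨(Finset.range (pos x)).attach.image fun j =>
      ⟨prev^[j.1] x, (iter j.1 x (Finset.mem_range.1 j.2)).2.1⟩, ?_, ?_⟩
    · rw [Finset.card_image_of_injective]
      · simp [pos]
      · intro j k hjk
        have hj := (iter j.1 x (Finset.mem_range.1 j.2)).1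
        have hk := (iter k.1 x (Finset.mem_range.1 k.2)).1
        have : prev^[j.1] x = prev^[k.1] x := congrArg Subtype.val hjk
        rw [this] at hj
        exact Subtype.ext (by omega)
    · intro y hy
      obtain ⟨j, _, rfl⟩ := Finset.mem_image.1 hy
      exact (iter j.1 x (Finset.mem_range.1 j.2)).2.2
  · rintro t ⟨Ω, hcard, ht⟩
    have hex : ∃ y ∈ Ω, pos x ≤ pos y.1 := by
      by_contra hc
      push Not at hc
      have hinj : Set.InjOn (fun y : {y : ZLat d // sameLine e x y} => pos y.1) Ω := by
        intro y _ z _ hyz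
        exact Subtype.ext (pos_inj _ _ (y.2.symm.trans z.2) hyz)
      have hmap : ∀ y ∈ Ω, pos y.1 ∈ Finset.Ico 1 (pos x) := fun y hy =>
        Finset.mem_Ico.2 ⟨posIdx_pos _, hc y hy⟩
      have := Finset.card_le_card_of_injOn _ hmap hinj
      rw [hcard, Nat.card_Ico] at this
      have h1 : 1 ≤ pos x := posIdx_pos (pairing e x)
      change pos x ≤ pos x - 1 at this
      omega
    obtain ⟨y, hy, hpos⟩ := hex
    have hp := posIdx_pos (pairing e x)
    have hp' : 1 ≤ pos x := hp
    obtain ⟨b1, b2, b3⟩ := iter (pos y.1 - pos x) y.1 (by omega)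
    have : prev^[pos y.1 - pos x] y.1 = x :=
      (pos_inj _ _ (y.2.trans b2) (by omega)).symm
    rw [this] at b3
    exact (ht y hy).trans b3

theorem reach_stepR {d m : ℕ} {e : Fin d → ℝ} (D : LineData d e) (U : Fin m → ZLat d → NNReal)
    (hU : ∀ i, {x | U i x ≠ 0}.Finite) : Reach U (fun i => stepR e (U i)) := by
  obtain ⟨M, V, hV, hK⟩ := exists_Kset U hU
  let F : (Fin m → ZLat d → NNReal) → (Fin m → ZLat d → NNReal) :=
    fun W i => D.r1.pol (D.r0.pol (W i))
  have hF : ∀ W, Reach W (F W) := fun W =>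
    Relation.ReflTransGen.tail (Relation.ReflTransGen.single ⟨D.r0, rfl⟩) ⟨D.r1, rfl⟩
  let S : ℕ → Fin m → ZLat d → NNReal := fun k => F^[k] U
  have hS : ∀ k, Reach (S k) (S (k + 1)) := by
    intro k
    simp only [S, Function.iterate_succ_apply']
    exact hF _
  obtain ⟨k, hk⟩ := stabilize hV S hK hS
  have hR : ∀ k, Reach U (S k) := by
    intro k
    induction k with
    | zero => exact Relation.ReflTransGen.refl
    | succ k ih => exact Relation.ReflTransGen.trans ih (hS k)
  have hKk := (Reach.props hK (hR k)).1
  have hfix : F (S k) = S k := by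
    have := hk (k + 1) (Nat.le_succ k)
    simpa only [S, Function.iterate_succ_apply'] using this
  have hp0 := Phi_pol hKk D.r0
  have hp1 := Phi_pol (Kset_pol hKk D.r0) D.r1
  have e0 : (fun i => D.r0.pol (S k i)) = S k := by
    refine hp0.2 (le_antisymm hp0.1 ?_)
    calc Phi (S k) = Phi (F (S k)) := by rw [hfix]
      _ ≤ _ := hp1.1
  have e1 : (fun i => D.r1.pol (S k i)) = S k := by
    have : F (S k) = fun i => D.r1.pol ((fun i => D.r0.pol (S k i)) i) := rfl
    rw [e0] at this
    rw [← this]; exact hfix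
  have hstep : ∀ k i, stepR e (S k i) = stepR e (U i) := by
    intro k i
    induction k with
    | zero => rfl
    | succ k ih =>
      rw [← ih]
      simp only [S, Function.iterate_succ_apply', F]
      rw [stepR_pol D.r1 D.l1, stepR_pol D.r0 D.l0]
  have : (fun i => stepR e (U i)) = S k := by
    funext i
    rw [← hstep k i]
    exact stepR_fixed D _ (congrFun e0 i) (congrFun e1 i)
  rw [this]
  exact hR k

/-- The reflection along the integer vector `a`. -/
def sig {d : ℕ} (a : ZLat d) (mm : ZLat d → ℤ) (c : ℤ) (x : ZLat d) : ZLat d :=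
  fun k => x k + (c - mm x) * a k

theorem mkLine {d : ℕ} (e : Fin d → ℝ) (a : ZLat d) (s : ℝ) (hs : s ≠ 0) (mm : ZLat d → ℤ)
    (he : ∀ k, e k = s * (a k : ℝ)) (i : Fin d) (hai : a i = 1)
    (hmm : ∀ x : ZLat d, 2 * ∑ k, e k * (x k : ℝ) = (mm x : ℝ))
    (hlin : ∀ (x : ZLat d) (t : ℤ), mm (fun k => x k + t * a k) = mm x + 2 * t)
    (hiso : ∀ c x y, latDist (sig a mm c x) (sig a mm c y) = latDist x y)
    (hdist : ∀ c x y, ((mm x ≤ c ∧ mm y ≤ c) ∨ (c ≤ mm x ∧ c ≤ mm y)) →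
      latDist x y ≤ latDist x (sig a mm c y))
    (hpot0 : ∀ x, 0 < mm x → wt d x < wt d (sig a mm 0 x))
    (hpot1 : ∀ x, mm x < 1 → wt d x < wt d (sig a mm 1 x)) :
    Nonempty (LineData d e) := by
  have hpair : ∀ x, pairing e x = mm x := by
    intro x
    unfold pairing
    rw [hmm, Int.floor_intCast]
  have hsm : ∀ c x, mm (sig a mm c x) = 2 * c - mm x := by
    intro c x
    unfold sig
    rw [hlin]; ring
  have hinv : ∀ c x, sig a mm c (sig a mm c x) = x := by
    intro c x
    funext k
    change sig a mm c x k + (c - mm (sig a mm c x)) * a k = x k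
    rw [hsm]
    unfold sig
    ring
  have hfix : ∀ c x, mm x = c → sig a mm c x = x := by
    intro c x h
    funext k
    simp [sig, h]
  have hsl : ∀ (x : ZLat d) (t : ℤ), sameLine e x (fun k => x k + t * a k) := by
    intro x t
    refine ⟨-(t : ℝ) / s, ?_⟩
    funext k
    simp only [Pi.smul_apply, smul_eq_mul, he]
    push_cast
    field_simp
    ring
  have hls : ∀ x y, sameLine e x y → ∃ t : ℤ, y = fun k => x k + t * a k := by
    rintro x y ⟨c, hc⟩
    refine ⟨y i - x i, ?_⟩
    funext k
    have h1 := congrFun hc i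
    have h2 := congrFun hc k
    simp only [Pi.smul_apply, smul_eq_mul, he, hai] at h1 h2
    push_cast at h1
    have : (y k : ℝ) = x k + (y i - x i) * a k := by
      have h3 : (y i : ℝ) - x i = -(c * s) := by linarith
      rw [h3]
      linarith
    exact_mod_cast this
  exact ⟨{
    r0 :=
      { σ := sig a mm 0
        P := {x | 0 ≤ mm x}
        inv := hinv 0
        cover := by
          intro x
          simp only [Set.mem_ofPred_eq, hsm]
          omega
        fix := by
          intro x h1 h2
          simp only [Set.mem_ofPred_eq, hsm] at h1 h2
          exact hfix 0 x (by omega)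
        iso := hiso 0
        dist := fun x y hx hy => hdist 0 x y (Or.inr ⟨hx, hy⟩)
        pot := by
          intro x hx hne
          refine hpot0 x (lt_of_le_of_ne hx fun h => hne (hfix 0 x h.symm)) }
    r1 :=
      { σ := sig a mm 1
        P := {x | mm x ≤ 1}
        inv := hinv 1
        cover := by
          intro x
          simp only [Set.mem_ofPred_eq, hsm]
          omega
        fix := by
          intro x h1 h2
          simp only [Set.mem_ofPred_eq, hsm] at h1 h2
          exact hfix 1 x (by omega)
        iso := hiso 1
        dist := fun x y hx hy => hdist 1 x y (Or.inl ⟨hx, hy⟩)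
        pot := by
          intro x hx hne
          refine hpot1 x (lt_of_le_of_ne hx fun h => hne (hfix 1 x h)) }
    P0 := by simp only [hpair]
    P1 := by simp only [hpair]
    m0 := by intro x; simp only [hpair, hsm]; ring
    m1 := by intro x; simp only [hpair, hsm]; ring
    l0 := fun x => hsl x _
    l1 := fun x => hsl x _
    inj := by
      intro x y h h'
      obtain ⟨t, rfl⟩ := hls x y h
      rw [hpair, hpair, hlin] at h'
      have : t = 0 := by omega
      subst this
      funext k; simp
    par := by
      intro x y h
      obtain ⟨t, rfl⟩ := hls x y h
      rw [hpair, hpair, hlin]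
      omega }⟩

theorem sum_le1 {d : ℕ} (f g : Fin d → ℕ) (i : Fin d) (h : ∀ k, k ≠ i → f k = g k)
    (hi : f i ≤ g i) : ∑ k, f k ≤ ∑ k, g k :=
  Finset.sum_le_sum fun k _ => by
    by_cases hk : k = i
    · rw [hk]; exact hi
    · exact (h k hk).le

theorem sum_lt1 {d : ℕ} (f g : Fin d → ℕ) (i : Fin d) (h : ∀ k, k ≠ i → f k = g k)
    (hi : f i < g i) : ∑ k, f k < ∑ k, g k :=
  Finset.sum_lt_sum (fun k _ => by
    by_cases hk : k = i
    · rw [hk]; exact hi.le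
    · exact (h k hk).le) ⟨i, Finset.mem_univ _, hi⟩

theorem sum_split2 {d : ℕ} (f : Fin d → ℕ) (i j : Fin d) (hij : i ≠ j) :
    ∑ k, f k = f i + f j + ∑ k ∈ (Finset.univ.erase i).erase j, f k := by
  rw [add_assoc, Finset.add_sum_erase _ _ (by simp [hij.symm]),
    Finset.add_sum_erase _ _ (Finset.mem_univ i)]

theorem sum_congr2 {d : ℕ} (f g : Fin d → ℕ) (i j : Fin d)
    (h : ∀ k, k ≠ i → k ≠ j → f k = g k) :
    ∑ k ∈ (Finset.univ.erase i).erase j, f k = ∑ k ∈ (Finset.univ.erase i).erase j, g k :=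
  Finset.sum_congr rfl fun k hk => by
    simp only [Finset.mem_erase, Finset.mem_univ, and_true] at hk
    exact h k hk.2 hk.1

theorem sum_le2 {d : ℕ} (f g : Fin d → ℕ) (i j : Fin d) (hij : i ≠ j)
    (h : ∀ k, k ≠ i → k ≠ j → f k = g k)
    (hi : f i + f j ≤ g i + g j) : ∑ k, f k ≤ ∑ k, g k := by
  rw [sum_split2 f i j hij, sum_split2 g i j hij, sum_congr2 f g i j h]
  omega

theorem sum_lt2 {d : ℕ} (f g : Fin d → ℕ) (i j : Fin d) (hij : i ≠ j)
    (h : ∀ k, k ≠ i → k ≠ j → f k = g k)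
    (hi : f i + f j < g i + g j) : ∑ k, f k < ∑ k, g k := by
  rw [sum_split2 f i j hij, sum_split2 g i j hij, sum_congr2 f g i j h]
  omega

theorem natAbs_sq_cast (z : ℤ) : ((z.natAbs ^ 2 : ℕ) : ℤ) = z ^ 2 := by
  push_cast; exact sq_abs z

theorem line_axis {d : ℕ} (i : Fin d) : Nonempty (LineData d (stdVec d i)) := by
  have hai : ∀ c (x : ZLat d) , sig (latE i) (fun x => 2 * x i) c x i = c - x i := by
    intro c x; simp [sig, latE]; ring
  have hak : ∀ c (x : ZLat d) k, k ≠ i → sig (latE i) (fun x => 2 * x i) c x k = x k := by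
    intro c x k hk; simp [sig, latE, hk]
  have hq : (0 : ℤ) < d - (i : ℕ) := by have := i.2; omega
  refine mkLine _ (latE i) 1 one_ne_zero (fun x => 2 * x i) ?_ i (by simp [latE]) ?_ ?_ ?_ ?_ ?_ ?_
  · intro k; simp [stdVec, latE]
  · intro x; simp [stdVec]
  · intro x t; simp [latE]; ring
  · intro c x y
    unfold latDist
    apply le_antisymm
    · refine sum_le1 _ _ i (fun k hk => by rw [hak _ _ _ hk, hak _ _ _ hk]) ?_
      rw [hai, hai]; omega
    · refine sum_le1 _ _ i (fun k hk => by rw [hak _ _ _ hk, hak _ _ _ hk]) ?_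
      rw [hai, hai]; omega
  · intro c x y h
    unfold latDist
    refine sum_le1 _ _ i (fun k hk => by rw [hak _ _ _ hk]) ?_
    rw [hai]
    omega
  · intro x h
    unfold wt
    refine sum_lt1 _ _ i (fun k hk => by rw [hak _ _ _ hk]) ?_
    rw [hai]
    zify
    simp only [sq_abs]
    have hx : 0 < x i := by omega
    have hN : (0 : ℤ) < 2 * (d + 1) := by positivity
    have := mul_pos (mul_pos hN hx) hq
    nlinarith
  · intro x h
    unfold wt
    refine sum_lt1 _ _ i (fun k hk => by rw [hak _ _ _ hk]) ?_
    rw [hai]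
    zify
    simp only [sq_abs]
    have hx : 0 < 1 - 2 * x i := by omega
    have hN : (0 : ℤ) < 2 * (d + 1) := by positivity
    have hr : (0 : ℤ) < 2 * (d + 1) - 2 * (d - (i : ℕ)) := by omega
    have := mul_pos (mul_pos hN hx) hr
    nlinarith

theorem line_plus {d : ℕ} (i j : Fin d) (hij : i < j) :
    Nonempty (LineData d (fun k => (stdVec d i k + stdVec d j k) / 2)) := by
  let a : ZLat d := fun k => latE i k + latE j k
  let mm : ZLat d → ℤ := fun x => x i + x j
  have hne : i ≠ j := hij.ne
  have hai : ∀ c (x : ZLat d), sig a mm c x i = c - x j := by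
    intro c x; simp [sig, latE, a, mm, hne]; ring
  have haj : ∀ c (x : ZLat d), sig a mm c x j = c - x i := by
    intro c x; simp [sig, latE, a, mm, hne.symm]; ring
  have hak : ∀ c (x : ZLat d) k, k ≠ i → k ≠ j → sig a mm c x k = x k := by
    intro c x k hk hk'; simp [sig, latE, a, hk, hk']
  have hi := i.2
  have hj := j.2
  have hlt : (i : ℕ) < (j : ℕ) := hij
  refine mkLine _ a (1 / 2) (by norm_num) mm ?_ i (by simp [a, latE, hne]) ?_ ?_ ?_ ?_ ?_ ?_
  · intro k; simp [stdVec, latE, a]; ring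
  · intro x
    simp only [stdVec, mm, add_div, add_mul, Finset.sum_add_distrib, ite_div, ite_mul]
    simp
    ring
  · intro x t; simp [latE, a, mm, hne, hne.symm]; ring
  · intro c x y
    unfold latDist
    apply le_antisymm
    · refine sum_le2 _ _ i j hne (fun k hk hk' => by rw [hak _ _ _ hk hk', hak _ _ _ hk hk']) ?_
      rw [hai, hai, haj, haj]; omega
    · refine sum_le2 _ _ i j hne (fun k hk hk' => by rw [hak _ _ _ hk hk', hak _ _ _ hk hk']) ?_
      rw [hai, hai, haj, haj]; omega
  · intro c x y h
    unfold latDist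
    refine sum_le2 _ _ i j hne (fun k hk hk' => by rw [hak _ _ _ hk hk']) ?_
    rw [hai, haj]
    simp only [mm] at h
    omega
  · intro x h
    unfold wt
    refine sum_lt2 _ _ i j hne (fun k hk hk' => by rw [hak _ _ _ hk hk']) ?_
    rw [hai, haj]
    simp only [mm] at h
    zify
    simp only [sq_abs]
    have hN : (0 : ℤ) < 2 * (d + 1) := by positivity
    have hr : (0 : ℤ) < (d - (i : ℕ)) + (d - (j : ℕ)) := by omega
    have := mul_pos (mul_pos hN h) hr
    nlinarith
  · intro x h
    unfold wt
    refine sum_lt2 _ _ i j hne (fun k hk hk' => by rw [hak _ _ _ hk hk']) ?_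
    rw [hai, haj]
    simp only [mm] at h
    zify
    simp only [sq_abs]
    have hx : 0 < 1 - (x i + x j) := by omega
    have hN : (0 : ℤ) < 2 * (d + 1) := by positivity
    have hr : (0 : ℤ) < 2 * (d + 1) - ((d - (i : ℕ)) + (d - (j : ℕ))) := by omega
    have := mul_pos (mul_pos hN hx) hr
    nlinarith

theorem line_minus {d : ℕ} (i j : Fin d) (hij : i < j) :
    Nonempty (LineData d (fun k => (stdVec d i k - stdVec d j k) / 2)) := by
  let a : ZLat d := fun k => latE i k - latE j k
  let mm : ZLat d → ℤ := fun x => x i - x j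
  have hne : i ≠ j := hij.ne
  have hai : ∀ c (x : ZLat d), sig a mm c x i = c + x j := by
    intro c x; simp [sig, latE, a, mm, hne]; ring
  have haj : ∀ c (x : ZLat d), sig a mm c x j = x i - c := by
    intro c x; simp [sig, latE, a, mm, hne.symm]; ring
  have hak : ∀ c (x : ZLat d) k, k ≠ i → k ≠ j → sig a mm c x k = x k := by
    intro c x k hk hk'; simp [sig, latE, a, hk, hk']
  have hi := i.2
  have hj := j.2
  have hlt : (i : ℕ) < (j : ℕ) := hij
  refine mkLine _ a (1 / 2) (by norm_num) mm ?_ i (by simp [a, latE, hne]) ?_ ?_ ?_ ?_ ?_ ?_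
  · intro k; simp [stdVec, latE, a]; ring
  · intro x
    simp only [stdVec, mm, sub_div, sub_mul, Finset.sum_sub_distrib, ite_div, ite_mul]
    simp
    ring
  · intro x t; simp [latE, a, mm, hne, hne.symm]; ring
  · intro c x y
    unfold latDist
    apply le_antisymm
    · refine sum_le2 _ _ i j hne (fun k hk hk' => by rw [hak _ _ _ hk hk', hak _ _ _ hk hk']) ?_
      rw [hai, hai, haj, haj]; omega
    · refine sum_le2 _ _ i j hne (fun k hk hk' => by rw [hak _ _ _ hk hk', hak _ _ _ hk hk']) ?_
      rw [hai, hai, haj, haj]; omega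
  · intro c x y h
    unfold latDist
    refine sum_le2 _ _ i j hne (fun k hk hk' => by rw [hak _ _ _ hk hk']) ?_
    rw [hai, haj]
    simp only [mm] at h
    omega
  · intro x h
    unfold wt
    refine sum_lt2 _ _ i j hne (fun k hk hk' => by rw [hak _ _ _ hk hk']) ?_
    rw [hai, haj]
    simp only [mm] at h
    zify
    simp only [sq_abs]
    have hN : (0 : ℤ) < 2 * (d + 1) := by positivity
    have hr : (0 : ℤ) < (d - (i : ℕ)) - (d - (j : ℕ)) := by omega
    have := mul_pos (mul_pos hN h) hr
    nlinarith
  · intro x h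
    unfold wt
    refine sum_lt2 _ _ i j hne (fun k hk hk' => by rw [hak _ _ _ hk hk']) ?_
    rw [hai, haj]
    simp only [mm] at h
    zify
    simp only [sq_abs]
    have hx : 0 < 1 - (x i - x j) := by omega
    have hN : (0 : ℤ) < 2 * (d + 1) := by positivity
    have hr : (0 : ℤ) < 2 * (d + 1) - ((d - (i : ℕ)) - (d - (j : ℕ))) := by omega
    have := mul_pos (mul_pos hN hx) hr
    nlinarith

theorem line_of_mem {d : ℕ} (e : Fin d → ℝ) (he : e ∈ EvecList d) : Nonempty (LineData d e) := by
  unfold EvecList at he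
  simp only [List.mem_append, List.mem_map, List.mem_flatMap, List.mem_filterMap,
    List.mem_finRange, true_and] at he
  rcases he with (⟨i, rfl⟩ | ⟨i, j, h⟩) | ⟨i, j, h⟩
  · exact line_axis i
  · by_cases hij : i < j
    · rw [if_pos hij] at h
      obtain rfl := Option.some.inj h
      exact line_plus i j hij
    · simp [hij] at h
  · by_cases hij : i < j
    · rw [if_pos hij] at h
      obtain rfl := Option.some.inj h
      exact line_minus i j hij
    · simp [hij] at h

/-- Truncation at level `t`. -/
def trunc {α : Type*} (t : NNReal) (u : α → NNReal) : α → NNReal :=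
  fun x => if t < u x then u x else 0

theorem trunc_le {α : Type*} (t : NNReal) (u : α → NNReal) (x : α) : trunc t u x ≤ u x := by
  unfold trunc; split_ifs <;> simp

theorem nthLargest_trunc {α : Type*} (t : NNReal) (u : α → NNReal) (n : ℕ) (hn : 1 ≤ n)
    (C : NNReal) (hC : ∀ x, u x ≤ C) :
    nthLargest (trunc t u) n = if t < nthLargest u n then nthLargest u n else 0 := by
  unfold nthLargest
  have hne : ∀ Ω : Finset α, Ω.card = n → Ω.Nonempty := fun Ω h =>
    Finset.card_pos.1 (by omega)
  have hbdd : ∀ v : α → NNReal, (∀ x, v x ≤ u x) →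
      BddAbove {s | ∃ Ω : Finset α, Ω.card = n ∧ ∀ x ∈ Ω, s ≤ v x} := by
    intro v hv
    refine ⟨C, ?_⟩
    rintro s ⟨Ω, hc, h⟩
    obtain ⟨x, hx⟩ := hne Ω hc
    exact (h x hx).trans ((hv x).trans (hC x))
  have hb := hbdd u (fun _ => le_rfl)
  have hb' := hbdd (trunc t u) (trunc_le t u)
  split_ifs with hlt
  · apply le_antisymm
    · refine csSup_le' ?_
      rintro s ⟨Ω, hc, h⟩
      exact le_csSup hb ⟨Ω, hc, fun x hx => (h x hx).trans (trunc_le t u x)⟩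
    · refine le_of_forall_lt fun c hc => ?_
      obtain ⟨s, ⟨Ω, hcard, h⟩, hs⟩ := exists_lt_of_lt_csSup' (max_lt hc hlt)
      refine lt_of_lt_of_le ((le_max_left c t).trans_lt hs) (le_csSup hb' ⟨Ω, hcard, fun x hx => ?_⟩)
      have : t < u x := ((le_max_right c t).trans_lt hs).trans_le (h x hx)
      simp only [trunc, this, if_true]
      exact h x hx
  · apply le_antisymm _ zero_le
    refine csSup_le' ?_
    rintro s ⟨Ω, hc, h⟩
    by_contra hs
    have hs : 0 < s := not_le.1 hs
    have hgt : ∀ x ∈ Ω, t < u x := by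
      intro x hx
      by_contra hx'
      have := h x hx
      simp only [trunc, hx', if_false] at this
      exact absurd this (not_le.2 hs)
    obtain ⟨z, hz, hmin⟩ := Finset.exists_min_image Ω u (hne Ω hc)
    exact hlt ((hgt z hz).trans_le (le_csSup hb ⟨Ω, hc, hmin⟩))

theorem stepR_trunc {d : ℕ} (e : Fin d → ℝ) (t : NNReal) (u : ZLat d → NNReal)
    (C : NNReal) (hC : ∀ x, u x ≤ C) : stepR e (trunc t u) = trunc t (stepR e u) := by
  funext x
  exact nthLargest_trunc t (fun y : {y : ZLat d // sameLine e x y} => u y.1) _ (posIdx_pos _) C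
    (fun y => hC y.1)

theorem stepR_bdd {d : ℕ} (e : Fin d → ℝ) (u : ZLat d → NNReal)
    (C : NNReal) (hC : ∀ x, u x ≤ C) (x : ZLat d) : stepR e u x ≤ C := by
  unfold stepR nthLargest
  refine csSup_le' ?_
  rintro s ⟨Ω, hc, h⟩
  obtain ⟨y, hy⟩ : Ω.Nonempty := Finset.card_pos.1 (by
    rw [hc]; exact posIdx_pos _)
  exact (h y hy).trans (hC _)

theorem iterR_bdd {d : ℕ} (u : ZLat d → NNReal) (C : NNReal) (hC : ∀ x, u x ≤ C) (k : ℕ) :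
    ∀ x, iterR d u k x ≤ C := by
  induction k with
  | zero => exact hC
  | succ k ih => exact stepR_bdd _ _ C ih

theorem iterR_trunc {d : ℕ} (t : NNReal) (u : ZLat d → NNReal) (C : NNReal) (hC : ∀ x, u x ≤ C)
    (k : ℕ) : iterR d (trunc t u) k = trunc t (iterR d u k) := by
  induction k with
  | zero => rfl
  | succ k ih =>
    simp only [iterR]
    rw [ih, stepR_trunc _ _ _ C (iterR_bdd u C hC k)]

theorem admissible_bdd {α : Type*} (u : α → NNReal) (hu : Admissible u) :
    ∃ C, ∀ x, u x ≤ C := by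
  obtain ⟨C, hC⟩ := ((hu 1 one_pos).image u).bddAbove
  refine ⟨max C 1, fun x => ?_⟩
  by_cases h : 1 < u x
  · exact (hC ⟨x, h, rfl⟩).trans (le_max_left _ _)
  · exact (not_lt.1 h).trans (le_max_right _ _)

theorem trunc_support {α : Type*} (u : α → NNReal) (hu : Admissible u) (t : NNReal) (ht : 0 < t) :
    {x | trunc t u x ≠ 0}.Finite := by
  refine (hu t ht).subset fun x hx => ?_
  by_contra h
  exact hx (by
    have : ¬ t < u x := h
    simp [trunc, this])

theorem G_mono {m : ℕ} {G : (Fin m → NNReal) → NNReal} (hG : LSup G) (hG0 : G 0 = 0)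
    (y z : Fin m → NNReal) (h : ∀ i, z i = 0 ∨ z i = y i) : G z ≤ G y := by
  classical
  have h1 := hG z (fun i => if z i = 0 then y i else 0)
  have e1 : z ⊔ (fun i => if z i = 0 then y i else 0) = y := by
    funext i
    by_cases hz : z i = 0
    · simp [hz]
    · simp only [Pi.sup_apply, hz, if_false]
      rw [(h i).resolve_left hz]
      exact max_eq_left zero_le
  have e2 : z ⊓ (fun i => if z i = 0 then y i else 0) = 0 := by
    funext i
    by_cases hz : z i = 0 <;> simp [hz]
  rw [e1, e2, hG0, add_zero] at h1
  exact le_self_add.trans h1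

theorem energy_trunc_le {d m : ℕ} (hd : 2 ≤ d) {G : (Fin m → NNReal) → NNReal} (hG : LSup G)
    (hG0 : G 0 = 0)
    (H : Fin m → Fin m → NNReal → NNReal) (hH : ∀ i j : Fin m, i < j → Antitone (H i j))
    (u : Fin m → ZLat d → NNReal) (hu : ∀ i, Admissible (u i)) (t : NNReal) (ht : 0 < t) :
    energy G H (fun i => trunc t (u i)) ≤ energy G H (fun i => RZd d (u i)) := by
  have hlen : 0 < (EvecList d).length := by
    simp only [EvecList, List.length_append, List.length_map, List.length_finRange]
    omega
  let S : ℕ → Fin m → ZLat d → NNReal := fun k i => iterR d (trunc t (u i)) k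
  obtain ⟨M, V, hV, hK⟩ := exists_Kset (S 0) (fun i => trunc_support (u i) (hu i) t ht)
  have hstep : ∀ k, S k ∈ Kset d m M V → Reach (S k) (S (k + 1)) := by
    intro k hk
    have hlt := Nat.mod_lt k hlen
    have hmem : (EvecList d).getD (k % (EvecList d).length) 0 ∈ EvecList d := by
      rw [List.getD_eq_getElem _ _ hlt]
      exact List.getElem_mem hlt
    obtain ⟨D⟩ := line_of_mem _ hmem
    exact reach_stepR D (S k) (fun i => Kset_support hk i)
  have hKk : ∀ k, S k ∈ Kset d m M V := by
    intro k
    induction k with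
    | zero => exact hK
    | succ k ih => exact (Reach.props ih (hstep k ih)).1
  obtain ⟨k₀, hk₀⟩ := stabilize hV S hK (fun k => hstep k (hKk k))
  have hR : ∀ k, Reach (S 0) (S k) := by
    intro k
    induction k with
    | zero => exact Relation.ReflTransGen.refl
    | succ k ih => exact Relation.ReflTransGen.trans ih (hstep k (hKk k))
  have hval : ∀ i x, S k₀ i x = 0 ∨ S k₀ i x = RZd d (u i) x := by
    intro i x
    by_cases h : S k₀ i x = 0
    · exact Or.inl h
    · right
      obtain ⟨C, hC⟩ := admissible_bdd (u i) (hu i)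
      have hev : ∀ k, k₀ ≤ k → iterR d (u i) k x = S k₀ i x := by
        intro k hk
        have h1 : trunc t (iterR d (u i) k) x = S k₀ i x := by
          rw [← hk₀ k hk, ← iterR_trunc t (u i) C hC k]
        rw [← h1]
        rw [← h1] at h
        unfold trunc at h ⊢
        split_ifs with hlt
        · rfl
        · simp [hlt] at h
      have hT : Tendsto (fun k => iterR d (u i) k x) atTop (𝓝 (S k₀ i x)) :=
        tendsto_const_nhds.congr' (by
          filter_upwards [eventually_ge_atTop k₀] with k hk
          exact (hev k hk).symm)
      exact hT.limUnder_eq.symm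
  refine (Reach.energy hG H hH (hR k₀)).trans ?_
  refine ENNReal.tsum_le_tsum fun x => ?_
  refine ENNReal.coe_le_coe.2 ?_
  exact mul_le_mul_of_nonneg_right
    (G_mono hG hG0 _ _ fun i => hval i (x i)) zero_le

theorem energy_le {d m : ℕ} (hd : 2 ≤ d) {G : (Fin m → NNReal) → NNReal} (hG : LSup G)
    (hG0 : G 0 = 0)
    (H : Fin m → Fin m → NNReal → NNReal) (hH : ∀ i j : Fin m, i < j → Antitone (H i j))
    (u : Fin m → ZLat d → NNReal) (hu : ∀ i, Admissible (u i)) :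
    energy G H u ≤ energy G H (fun i => RZd d (u i)) := by
  unfold energy
  rw [ENNReal.tsum_eq_iSup_sum]
  refine iSup_le fun s => ?_
  have hev : ∀ᶠ t : NNReal in 𝓝[>] 0, ∀ x ∈ s, ∀ i, trunc t (u i) (x i) = u i (x i) := by
    rw [Filter.eventually_all_finset]
    intro x _
    rw [Filter.eventually_all]
    intro i
    by_cases h : u i (x i) = 0
    · filter_upwards with t
      simp [trunc, h]
    · have hpos : 0 < u i (x i) := pos_iff_ne_zero.2 h
      filter_upwards [nhdsWithin_le_nhds (Iio_mem_nhds hpos)] with t htt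
      have : t < u i (x i) := htt
      simp [trunc, this]
  obtain ⟨t, ht, ht0⟩ := (hev.and self_mem_nhdsWithin).exists
  have ht0 : 0 < t := ht0
  calc ∑ x ∈ s, (summand G H u x : ENNReal)
      = ∑ x ∈ s, (summand G H (fun i => trunc t (u i)) x : ENNReal) := by
        refine Finset.sum_congr rfl fun x hx => ?_
        unfold summand
        simp only [ht x hx]
    _ ≤ energy G H (fun i => trunc t (u i)) := ENNReal.sum_le_tsum s
    _ ≤ _ := energy_trunc_le hd hG hG0 H hH u hu t ht0

/-- Discrete extended Riesz inequality. -/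
theorem stmt13 (d m : ℕ) (hd : 2 ≤ d) (hm : 2 ≤ m)
    (u : Fin m → ZLat d → NNReal) (hu : ∀ i, Admissible (u i))
    (G : (Fin m → NNReal) → NNReal) (hG : SupermodularVec G) (hG0 : G 0 = 0)
    (H : Fin m → Fin m → NNReal → NNReal) (hH : ∀ i j : Fin m, i < j → Antitone (H i j)) :
    ∑' x : Fin m → ZLat d,
        ((G (fun i => u i (x i)) *
          ∏ i : Fin m, ∏ j : Fin m,
            (if i < j then H i j (latDist (x i) (x j)) else 1) : NNReal) : ENNReal) ≤
    ∑' x : Fin m → ZLat d,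
        ((G (fun i => RZd d (u i) (x i)) *
          ∏ i : Fin m, ∏ j : Fin m,
            (if i < j then H i j (latDist (x i) (x j)) else 1) : NNReal) : ENNReal) := by
  exact energy_le hd (lsup_of_supermodular hG) hG0 H hH u hu

end
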